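/- arXiv:1506.05719 — 2 statements merged into one kernel-verified Lean document; each statement's English description precedes it below -/
import Mathlib

section
/- For every i, if X_i is non-empty and there exist a vertex y_i ∈ Y_i and a vertex y_{i+3} ∈ Y_{i+3}, then y_i and y_{i+3} are adjacent. -/
open SimpleGraph

/-- The claw `K_{1,3}`: vertex 0 adjacent to 1, 2, 3. -/
def claw : SimpleGraph (Fin 4) := SimpleGraph.fromRel (fun a _ => a = 0)

/-- `4K_1`: the edgeless graph on four vertices. -/
def fourK1 : SimpleGraph (Fin 4) := ⊥

/-- `K_5 - e`: the complete graph on five vertices minus the edge {0,1}. -/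
def K5e : SimpleGraph (Fin 5) :=
  SimpleGraph.fromRel (fun a b => ¬(a = 0 ∧ b = 1) ∧ ¬(a = 1 ∧ b = 0))

/-- The 5-wheel: the cycle 0-1-2-3-4-0 together with hub 5 adjacent to all. -/
def wheel5 : SimpleGraph (Fin 6) :=
  SimpleGraph.fromRel (fun a b =>
    (a ≠ 5 ∧ b ≠ 5 ∧ b.val = (a.val + 1) % 5) ∨ a = 5 ∨ b = 5)

/-- The `C_5`-twin: the cycle 0-1-2-3-4-0 together with vertex 5, a true twin
of vertex 0 (adjacent to 0, 1 and 4). -/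
def C5twin : SimpleGraph (Fin 6) :=
  SimpleGraph.fromRel (fun a b =>
    (a ≠ 5 ∧ b ≠ 5 ∧ b.val = (a.val + 1) % 5) ∨ (a = 5 ∧ (b = 0 ∨ b = 1 ∨ b = 4)))

/-- The `P_5`-twin: the path 0-1-2-3-4 together with vertex 5, a true twin of
the middle vertex 2 (adjacent to 1, 2 and 3). -/
def P5twin : SimpleGraph (Fin 6) :=
  SimpleGraph.fromRel (fun a b =>
    (a ≠ 5 ∧ b ≠ 5 ∧ b.val = a.val + 1) ∨ (a = 5 ∧ (b = 1 ∨ b = 2 ∨ b = 3)))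

/-- The chordless cycle on seven vertices. -/
def C7 : SimpleGraph (Fin 7) :=
  SimpleGraph.fromRel (fun a b => b.val = (a.val + 1) % 7)

/-- `G` is `H`-free: `G` contains no induced subgraph isomorphic to `H`,
i.e. there is no graph embedding of `H` into `G`. -/
def Free {V W : Type*} (G : SimpleGraph V) (H : SimpleGraph W) : Prop :=
  IsEmpty (H ↪g G)

/-- `X_i`: vertices outside the five-cycle `v 0, …, v 4` whose neighbours on the
cycle are exactly `v i` and `v (i+1)`. -/
def cycX {V : Type*} (G : SimpleGraph V) (v : ZMod 5 → V) (i : ZMod 5) : Set V :=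
  {w | w ∉ Set.range v ∧ ∀ j : ZMod 5, G.Adj w (v j) ↔ (j = i ∨ j = i + 1)}

/-- `Y_i`: vertices outside the five-cycle whose neighbours on the cycle are
exactly `v i, v (i+1), v (i+2), v (i+3)`. -/
def cycY {V : Type*} (G : SimpleGraph V) (v : ZMod 5 → V) (i : ZMod 5) : Set V :=
  {w | w ∉ Set.range v ∧
    ∀ j : ZMod 5, G.Adj w (v j) ↔ (j = i ∨ j = i + 1 ∨ j = i + 2 ∨ j = i + 3)}

/-- `R`: vertices outside the five-cycle with no neighbour on the cycle. -/
def cycR {V : Type*} (G : SimpleGraph V) (v : ZMod 5 → V) : Set V :=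
  {w | w ∉ Set.range v ∧ ∀ j : ZMod 5, ¬ G.Adj w (v j)}

lemma claw_contra {V : Type*} {G : SimpleGraph V} (h : _root_.Free G claw) {a b c d : V}
    (hab : G.Adj a b) (hac : G.Adj a c) (had : G.Adj a d)
    (hbc : ¬ G.Adj b c) (hbd : ¬ G.Adj b d) (hcd : ¬ G.Adj c d)
    (nbc : b ≠ c) (nbd : b ≠ d) (ncd : c ≠ d) : False := by
  have n1 := hab.ne
  have n2 := hac.ne
  have n3 := had.ne
  refine h.false ⟨⟨![a, b, c, d], ?_⟩, ?_⟩
  · intro i j hij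
    fin_cases i <;> fin_cases j <;> simp_all
  · intro i j
    change G.Adj (![a, b, c, d] i) (![a, b, c, d] j) ↔ claw.Adj i j
    fin_cases i <;> fin_cases j <;> simp_all [claw, G.adj_comm]

lemma K5e_contra {V : Type*} {G : SimpleGraph V} (h : _root_.Free G K5e) {a b c d e : V}
    (nab : a ≠ b) (hab : ¬ G.Adj a b) (hac : G.Adj a c) (had : G.Adj a d) (hae : G.Adj a e)
    (hbc : G.Adj b c) (hbd : G.Adj b d) (hbe : G.Adj b e)
    (hcd : G.Adj c d) (hce : G.Adj c e) (hde : G.Adj d e) : False := by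
  have n1 := hac.ne
  have n2 := had.ne
  have n3 := hae.ne
  have n4 := hbc.ne
  have n5 := hbd.ne
  have n6 := hbe.ne
  have n7 := hcd.ne
  have n8 := hce.ne
  have n9 := hde.ne
  refine h.false ⟨⟨![a, b, c, d, e], ?_⟩, ?_⟩
  · intro i j hij
    fin_cases i <;> fin_cases j <;> simp_all
  · intro i j
    change G.Adj (![a, b, c, d, e] i) (![a, b, c, d, e] j) ↔ K5e.Adj i j
    fin_cases i <;> fin_cases j <;> simp_all [K5e, G.adj_comm]

theorem stmt_5     {V : Type*} [Fintype V] (G : SimpleGraph V)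
    (hconn : G.Connected)
    (hclaw : _root_.Free G claw) (h4K1 : _root_.Free G fourK1) (hK5e : _root_.Free G K5e)
    (hW5 : _root_.Free G wheel5) (hC5t : _root_.Free G C5twin) (hP5t : _root_.Free G P5twin)
    (v : ZMod 5 → V) (hv : Function.Injective v)
    (hC : ∀ i j : ZMod 5, G.Adj (v i) (v j) ↔ (j = i + 1 ∨ i = j + 1)) :
    ∀ i : ZMod 5, (cycX G v i).Nonempty →
      ∀ y₁ ∈ cycY G v i, ∀ y₂ ∈ cycY G v (i + 3), G.Adj y₁ y₂ := by
  rintro i ⟨x, -, hx⟩ y₁ ⟨-, h1⟩ y₂ ⟨-, h2⟩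
  by_contra hn
  have x0 : G.Adj x (v i) := (hx _).2 (by simp)
  have x1 : G.Adj x (v (i+1)) := (hx _).2 (by simp)
  have x2 : ¬ G.Adj x (v (i+2)) := fun h => absurd ((hx _).1 h) (by clear * -; decide +revert)
  have x4 : ¬ G.Adj x (v (i+4)) := fun h => absurd ((hx _).1 h) (by clear * -; decide +revert)
  have a0 : G.Adj y₁ (v i) := (h1 _).2 (by simp)
  have a1 : G.Adj y₁ (v (i+1)) := (h1 _).2 (by simp)
  have a2 : G.Adj y₁ (v (i+2)) := (h1 _).2 (by simp)
  have a4 : ¬ G.Adj y₁ (v (i+4)) := fun h => absurd ((h1 _).1 h) (by clear * -; decide +revert)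
  have b0 : G.Adj y₂ (v i) := (h2 _).2 (by clear * -; decide +revert)
  have b1 : G.Adj y₂ (v (i+1)) := (h2 _).2 (by clear * -; decide +revert)
  have b4 : G.Adj y₂ (v (i+4)) := (h2 _).2 (by clear * -; decide +revert)
  have b2 : ¬ G.Adj y₂ (v (i+2)) := fun h => absurd ((h2 _).1 h) (by clear * -; decide +revert)
  have c01 : G.Adj (v i) (v (i+1)) := (hC _ _).2 (by simp)
  have c12 : G.Adj (v (i+1)) (v (i+2)) := (hC _ _).2 (by clear * -; decide +revert)
  have c04 : G.Adj (v i) (v (i+4)) := (hC _ _).2 (by clear * -; decide +revert)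
  have c02 : ¬ G.Adj (v i) (v (i+2)) := fun h => absurd ((hC _ _).1 h) (by clear * -; decide +revert)
  have c14 : ¬ G.Adj (v (i+1)) (v (i+4)) :=
    fun h => absurd ((hC _ _).1 h) (by clear * -; decide +revert)
  have ny : y₁ ≠ y₂ := by rintro rfl; exact b2 a2
  have nx1 : x ≠ y₁ := by rintro rfl; exact x2 a2
  have nx2 : x ≠ y₂ := by rintro rfl; exact x4 b4
  -- the claw centred at `v (i+1)` forces `x ~ y₂`
  have xy2 : G.Adj x y₂ := by
    by_contra h
    refine claw_contra hclaw x1.symm c12 b1.symm x2 h (fun h => b2 h.symm) ?_ nx2 ?_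
    · intro e; rw [e] at x0; exact c02 x0.symm
    · intro e; rw [← e] at b0; exact c02 b0.symm
  -- the claw centred at `v i` forces `x ~ y₁`
  have xy1 : G.Adj x y₁ := by
    by_contra h
    refine claw_contra hclaw x0.symm c04 a0.symm x4 h (fun h => a4 h.symm) ?_ nx1 ?_
    · intro e; rw [e] at x1; exact c14 x1.symm
    · intro e; rw [← e] at a1; exact c14 a1.symm
  exact K5e_contra hK5e ny hn a0 a1 xy1.symm b0 b1 xy2.symm c01 x0.symm x1.symm
end

section
/- If R is non-empty, then G has at most 22 vertices or G contains a clique cutset. -/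
open SimpleGraph

theorem aux_claw {V : Type*} {G : SimpleGraph V} (h : _root_.Free G claw) {a b c d : V}
    (ab : G.Adj a b) (ac : G.Adj a c) (ad : G.Adj a d) (bc : ¬ G.Adj b c) (bd : ¬ G.Adj b d)
    (cd : ¬ G.Adj c d) (nbc : b ≠ c) (nbd : b ≠ d) (ncd : c ≠ d) : False := by
  refine h.false ⟨⟨![a, b, c, d], ?_⟩, ?_⟩
  · intro i j hij
    have := ab.ne; have := ac.ne; have := ad.ne
    fin_cases i <;> fin_cases j <;> simp_all
  · intro i j
    change G.Adj (![a, b, c, d] i) (![a, b, c, d] j) ↔ _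
    have := ab.symm; have := ac.symm; have := ad.symm
    rw [G.adj_comm] at bc bd cd
    have bc' := bc; have bd' := bd; have cd' := cd
    rw [G.adj_comm] at bc' bd' cd'
    fin_cases i <;> fin_cases j <;> simp_all [claw]

theorem aux_4K1 {V : Type*} {G : SimpleGraph V} (h : _root_.Free G fourK1) {a b c d : V}
    (ab : ¬ G.Adj a b) (ac : ¬ G.Adj a c) (ad : ¬ G.Adj a d) (bc : ¬ G.Adj b c)
    (bd : ¬ G.Adj b d) (cd : ¬ G.Adj c d) (nab : a ≠ b) (nac : a ≠ c) (nad : a ≠ d)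
    (nbc : b ≠ c) (nbd : b ≠ d) (ncd : c ≠ d) : False := by
  refine h.false ⟨⟨![a, b, c, d], ?_⟩, ?_⟩
  · intro i j hij
    fin_cases i <;> fin_cases j <;> simp_all
  · intro i j
    change G.Adj (![a, b, c, d] i) (![a, b, c, d] j) ↔ _
    have := mt SimpleGraph.Adj.symm ab; have := mt SimpleGraph.Adj.symm ac; have := mt SimpleGraph.Adj.symm ad
    have := mt SimpleGraph.Adj.symm bc; have := mt SimpleGraph.Adj.symm bd; have := mt SimpleGraph.Adj.symm cd
    fin_cases i <;> fin_cases j <;> simp_all [fourK1]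

theorem aux_K5e {V : Type*} {G : SimpleGraph V} (h : _root_.Free G K5e) {a b c d e : V}
    (nab : a ≠ b) (ab : ¬ G.Adj a b) (ac : G.Adj a c) (ad : G.Adj a d) (ae : G.Adj a e)
    (bc : G.Adj b c) (bd : G.Adj b d) (be : G.Adj b e) (cd : G.Adj c d) (ce : G.Adj c e)
    (de : G.Adj d e) : False := by
  refine h.false ⟨⟨![a, b, c, d, e], ?_⟩, ?_⟩
  · intro i j hij
    have := ac.ne; have := ad.ne; have := ae.ne; have := bc.ne; have := bd.ne
    have := be.ne; have := cd.ne; have := ce.ne; have := de.ne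
    fin_cases i <;> fin_cases j <;> simp_all
  · intro i j
    change G.Adj (![a, b, c, d, e] i) (![a, b, c, d, e] j) ↔ _
    have := mt SimpleGraph.Adj.symm ab
    have := ac.symm; have := ad.symm; have := ae.symm; have := bc.symm; have := bd.symm
    have := be.symm; have := cd.symm; have := ce.symm; have := de.symm
    fin_cases i <;> fin_cases j <;> simp_all [K5e]

theorem aux_six {V : Type*} {G : SimpleGraph V} {H : SimpleGraph (Fin 6)}
    (h : _root_.Free G H) {v : ZMod 5 → V} (hv : Function.Injective v) {w : V}
    (hw : w ∉ Set.range v) (i : ZMod 5)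
    (h1 : ∀ a b : Fin 5, G.Adj (v (i + (a.val : ZMod 5))) (v (i + (b.val : ZMod 5))) ↔
      H.Adj a.castSucc b.castSucc)
    (h2 : ∀ a : Fin 5, G.Adj w (v (i + (a.val : ZMod 5))) ↔ H.Adj (Fin.last 5) a.castSucc) :
    False := by
  refine h.false ⟨⟨Fin.snoc (α := fun _ => V) (fun a : Fin 5 => v (i + (a.val : ZMod 5))) w,
    ?_⟩, ?_⟩
  · intro a b hab
    induction a using Fin.lastCases with
    | last =>
      induction b using Fin.lastCases with
      | last => rfl
      | cast b => simp at hab; exact absurd ⟨_, hab.symm⟩ hw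
    | cast a =>
      induction b using Fin.lastCases with
      | last => simp at hab; exact absurd ⟨_, hab⟩ hw
      | cast b =>
        simp at hab
        have := hv hab
        have key : ∀ a b : Fin 5, ((a.val : ZMod 5)) = (b.val : ZMod 5) → a = b := by decide
        rw [key a b (add_left_cancel this)]
  · intro a b
    change G.Adj (Fin.snoc (α := fun _ => V) (fun a : Fin 5 => v (i + (a.val : ZMod 5))) w a : V)
      (Fin.snoc (α := fun _ => V) (fun a : Fin 5 => v (i + (a.val : ZMod 5))) w b : V) ↔ _
    induction a using Fin.lastCases with
    | last =>
      induction b using Fin.lastCases with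
      | last => simp
      | cast b => rw [Fin.snoc_last, Fin.snoc_castSucc]; exact h2 b
    | cast a =>
      induction b using Fin.lastCases with
      | last =>
        rw [G.adj_comm, H.adj_comm]; rw [Fin.snoc_last, Fin.snoc_castSucc]; exact h2 a
      | cast b => simpa using h1 a b

theorem aux_zmod : ∀ a b : Fin 5, ((b.val : ZMod 5) = a.val + 1 ↔ b.val = (a.val + 1) % 5) := by
  decide

theorem aux_cyc {V : Type*} {G : SimpleGraph V} {v : ZMod 5 → V}
    (hC : ∀ i j : ZMod 5, G.Adj (v i) (v j) ↔ (j = i + 1 ∨ i = j + 1)) (i : ZMod 5)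
    (a b : Fin 5) : G.Adj (v (i + (a.val : ZMod 5))) (v (i + (b.val : ZMod 5))) ↔
      (b.val = (a.val + 1) % 5 ∨ a.val = (b.val + 1) % 5) := by
  rw [hC, ← aux_zmod a b, ← aux_zmod b a, add_assoc, add_assoc, add_right_inj, add_right_inj]

theorem aux_pat : ∀ p : ZMod 5 → Bool, (∀ i, p i = true → p (i + 1) = true ∨ p (i - 1) = true) →
    (∀ i, ¬ (p i = true ∧ p (i + 1) = true ∧ p (i + 2) = false ∧ p (i + 3) = false ∧
      p (i + 4) = true)) →
    (∃ i, p i = false) → (∀ j, p j = false) ∨ (∃ i, ∀ j, p j = true ↔ (j = i ∨ j = i + 1)) ∨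
    (∃ i, ∀ j, p j = true ↔ (j = i ∨ j = i + 1 ∨ j = i + 2 ∨ j = i + 3)) := by
  decide

theorem aux_class {V : Type*} {G : SimpleGraph V}
    (hclaw : _root_.Free G claw)
    (hW5 : _root_.Free G wheel5) (hC5t : _root_.Free G C5twin)
    (v : ZMod 5 → V) (hv : Function.Injective v)
    (hC : ∀ i j : ZMod 5, G.Adj (v i) (v j) ↔ (j = i + 1 ∨ i = j + 1)) (w : V) :
    w ∈ Set.range v ∨ w ∈ cycR G v ∨ (∃ i, w ∈ cycX G v i) ∨ (∃ i, w ∈ cycY G v i) := by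
  classical
  by_cases hw : w ∈ Set.range v
  · exact Or.inl hw
  right
  have hne : ∀ j, w ≠ v j := fun j h => hw ⟨j, h.symm⟩
  have key := aux_pat (fun j => decide (G.Adj w (v j))) ?_ ?_ ?_
  · simp only [decide_eq_true_eq, decide_eq_false_iff_not] at key
    rcases key with h | ⟨i, h⟩ | ⟨i, h⟩
    · exact Or.inl ⟨hw, h⟩
    · exact Or.inr (Or.inl ⟨i, hw, h⟩)
    · exact Or.inr (Or.inr ⟨i, hw, h⟩)
  · intro i
    simp only [decide_eq_true_eq]
    intro h
    by_contra! hc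
    obtain ⟨h1, h2⟩ := hc
    have d1 : ∀ i : ZMod 5, ¬ (i - 1 = i + 1 + 1 ∨ i + 1 = i - 1 + 1) ∧ i + 1 ≠ i - 1 := by decide
    have d2 : ∀ i : ZMod 5, i = i - 1 + 1 := by decide
    exact aux_claw hclaw h.symm ((hC i (i + 1)).2 (Or.inl rfl)) ((hC i (i - 1)).2 (Or.inr (d2 i)))
      h1 h2 (fun h' => (d1 i).1 ((hC (i + 1) (i - 1)).1 h')) (hne _) (hne _)
      (fun h' => (d1 i).2 (hv h'))
  · intro i
    simp only [decide_eq_true_eq, decide_eq_false_iff_not]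
    rintro ⟨h0, h1, h2, h3, h4⟩
    refine aux_six hC5t hv hw i ?_ ?_
    · intro a b
      rw [aux_cyc hC]
      revert a b
      simp only [C5twin, SimpleGraph.fromRel_adj]
      decide
    · intro a
      have h0' : G.Adj w (v (i + 0)) := by rwa [add_zero]
      have e : ∀ a : Fin 5, C5twin.Adj (Fin.last 5) a.castSucc ↔ (a = 0 ∨ a = 1 ∨ a = 4) := by
        simp only [C5twin, SimpleGraph.fromRel_adj]
        decide
      rw [e]
      fin_cases a
      · exact iff_of_true h0' (by decide)
      · exact iff_of_true h1 (by decide)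
      · exact iff_of_false h2 (by decide)
      · exact iff_of_false h3 (by decide)
      · exact iff_of_true h4 (by decide)
  · by_contra hc
    push Not at hc
    simp only [ne_eq, decide_eq_false_iff_not, not_not] at hc
    refine aux_six hW5 hv hw 0 ?_ ?_
    · intro a b
      rw [aux_cyc hC]
      revert a b
      simp only [wheel5, SimpleGraph.fromRel_adj]
      decide
    · intro a
      refine iff_of_true (hc _) ?_
      revert a
      simp only [wheel5, SimpleGraph.fromRel_adj]
      decide

theorem stmt_14     {V : Type*} [Fintype V] (G : SimpleGraph V)
    (hconn : G.Connected)
    (hclaw : _root_.Free G claw) (h4K1 : _root_.Free G fourK1) (hK5e : _root_.Free G K5e)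
    (hW5 : _root_.Free G wheel5) (hC5t : _root_.Free G C5twin) (hP5t : _root_.Free G P5twin)
    (v : ZMod 5 → V) (hv : Function.Injective v)
    (hC : ∀ i j : ZMod 5, G.Adj (v i) (v j) ↔ (j = i + 1 ∨ i = j + 1))
    (hR : (cycR G v).Nonempty) :
    Fintype.card V ≤ 22 ∨
      ∃ S : Set V, G.IsClique S ∧ ¬ (G.induce (Sᶜ : Set V)).Connected := by
  classical
  have cls := aux_class hclaw hW5 hC5t v hv hC
  have hneR : ∀ {w}, w ∉ Set.range v → ∀ j, w ≠ v j := fun hw j h => hw ⟨j, h.symm⟩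
  have Rcl : ∀ a ∈ cycR G v, ∀ b ∈ cycR G v, a ≠ b → G.Adj a b := by
    intro a ha b hb hab
    by_contra h
    exact aux_4K1 h4K1 h (ha.2 0) (ha.2 2) (hb.2 0) (hb.2 2)
      (fun h' => absurd ((hC 0 2).1 h') (by decide)) hab
      (hneR ha.1 _) (hneR ha.1 _) (hneR hb.1 _) (hneR hb.1 _)
      (fun h' => absurd (hv h') (by decide))
  have RX : ∀ a ∈ cycR G v, ∀ i, ∀ x ∈ cycX G v i, G.Adj a x := by
    intro a ha i x hx
    by_contra h
    have d : ∀ i : ZMod 5, ¬ (i + 2 = i ∨ i + 2 = i + 1) ∧ ¬ (i + 4 = i ∨ i + 4 = i + 1) ∧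
      ¬ (i + 4 = i + 2 + 1 ∨ i + 2 = i + 4 + 1) ∧ i + 2 ≠ i + 4 ∧ (0 : ZMod 5) = 0 := by decide
    obtain ⟨d1, d2, d3, d4, -⟩ := d i
    refine aux_4K1 h4K1 h (ha.2 (i + 2)) (ha.2 (i + 4)) (fun h' => d1 ((hx.2 _).1 h'))
      (fun h' => d2 ((hx.2 _).1 h')) (fun h' => d3 ((hC _ _).1 h')) ?_
      (hneR ha.1 _) (hneR ha.1 _) (hneR hx.1 _) (hneR hx.1 _) (fun h' => d4 (hv h'))
    rintro rfl
    exact ha.2 i ((hx.2 i).2 (Or.inl rfl))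
  have RY : ∀ a ∈ cycR G v, ∀ i, ∀ y ∈ cycY G v i, ¬ G.Adj a y := by
    intro a ha i y hy h
    have d : ∀ i : ZMod 5, ¬ (i + 2 = i + 1 ∨ i = i + 2 + 1) ∧ i ≠ i + 2 := by decide
    obtain ⟨d1, d2⟩ := d i
    exact aux_claw hclaw h.symm ((hy.2 i).2 (by simp)) ((hy.2 (i + 2)).2 (by simp)) (ha.2 _)
      (ha.2 _) (fun h' => d1 ((hC _ _).1 h')) (hneR ha.1 _) (hneR ha.1 _) (fun h' => d2 (hv h'))
  have d0 : ∀ i : ZMod 5, i = i + 4 + 1 ∧ ¬ (i + 4 = i ∨ i + 4 = i + 1) ∧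
    ¬ (i + 4 = i ∨ i + 4 = i + 1 ∨ i + 4 = i + 2 ∨ i + 4 = i + 3) ∧
    ¬ (i + 2 = i + 1 ∨ i = i + 2 + 1) ∧ i ≠ i + 2 ∧ i + 2 = i + 1 + 1 := by decide
  have Xcl : ∀ i, ∀ a ∈ cycX G v i, ∀ b ∈ cycX G v i, a ≠ b → G.Adj a b := by
    intro i a ha b hb hab
    by_contra h
    exact aux_claw hclaw ((ha.2 i).2 (by simp)).symm ((hb.2 i).2 (by simp)).symm
      ((hC i (i + 4)).2 (Or.inr (d0 i).1)) h (fun h' => (d0 i).2.1 ((ha.2 _).1 h'))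
      (fun h' => (d0 i).2.1 ((hb.2 _).1 h')) hab (hneR ha.1 _) (hneR hb.1 _)
  have Ycl : ∀ i, ∀ a ∈ cycY G v i, ∀ b ∈ cycY G v i, a ≠ b → G.Adj a b := by
    intro i a ha b hb hab
    by_contra h
    exact aux_claw hclaw ((ha.2 i).2 (by simp)).symm ((hb.2 i).2 (by simp)).symm
      ((hC i (i + 4)).2 (Or.inr (d0 i).1)) h (fun h' => (d0 i).2.2.1 ((ha.2 _).1 h'))
      (fun h' => (d0 i).2.2.1 ((hb.2 _).1 h')) hab (hneR ha.1 _) (hneR hb.1 _)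
  obtain ⟨r, hr⟩ := hR
  have X2 : ∀ i, (cycX G v i).toFinset.card ≤ 2 := by
    intro i
    by_contra! h
    obtain ⟨a, b, c, ha, hb, hc, ab, ac, bc⟩ := Finset.two_lt_card_iff.1 h
    rw [Set.mem_toFinset] at ha hb hc
    exact aux_K5e hK5e (hneR hr.1 i) (hr.2 i) (RX r hr i a ha) (RX r hr i b hb) (RX r hr i c hc)
      ((ha.2 i).2 (by simp)).symm ((hb.2 i).2 (by simp)).symm ((hc.2 i).2 (by simp)).symm
      (Xcl i a ha b hb ab) (Xcl i a ha c hc ac) (Xcl i b hb c hc bc)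
  have Y1 : ∀ i, (cycY G v i).toFinset.card ≤ 1 := by
    intro i
    by_contra! h
    obtain ⟨a, b, ha, hb, ab⟩ := Finset.one_lt_card_iff.1 h
    rw [Set.mem_toFinset] at ha hb
    obtain ⟨-, -, -, d1, d2, d3⟩ := d0 i
    exact aux_K5e hK5e (fun h' => d2 (hv h')) (fun h' => d1 ((hC _ _).1 h'))
      ((ha.2 i).2 (by simp)).symm ((hb.2 i).2 (by simp)).symm
      ((hC i (i + 1)).2 (Or.inl rfl))
      ((ha.2 (i + 2)).2 (by simp)).symm ((hb.2 (i + 2)).2 (by simp)).symm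
      ((hC (i + 2) (i + 1)).2 (Or.inr d3)) (Ycl i a ha b hb ab)
      ((ha.2 (i + 1)).2 (by simp)) ((hb.2 (i + 1)).2 (by simp))
  by_cases hR2 : (cycR G v).toFinset.card ≤ 2
  · left
    have hsub : (Finset.univ : Finset V) ⊆ (Finset.univ.image v ∪ (cycR G v).toFinset) ∪
        ((Finset.univ.biUnion fun i => (cycX G v i).toFinset) ∪
        (Finset.univ.biUnion fun i => (cycY G v i).toFinset)) := by
      intro w _
      rcases cls w with ⟨i, h⟩ | h | ⟨i, h⟩ | ⟨i, h⟩
      · simp [← h]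
      · simp [h]
      · have : ∃ i, w ∈ cycX G v i := ⟨i, h⟩
        simp [this]
      · have : ∃ i, w ∈ cycY G v i := ⟨i, h⟩
        simp [this]
    have c0 := Finset.card_le_card hsub
    have c1 : (Finset.univ.image v).card ≤ 5 := Finset.card_image_le
    have c2 := Finset.card_biUnion_le_card_mul Finset.univ (fun i => (cycX G v i).toFinset) 2
      (fun i _ => X2 i)
    have c3 := Finset.card_biUnion_le_card_mul Finset.univ (fun i => (cycY G v i).toFinset) 1
      (fun i _ => Y1 i)
    have c4 : (Finset.univ : Finset (ZMod 5)).card = 5 := rfl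
    rw [c4] at c2 c3
    rw [Finset.card_univ] at c0
    refine c0.trans ((Finset.card_union_le _ _).trans ?_)
    have c5 := Finset.card_union_le (Finset.univ.image v) (cycR G v).toFinset
    have c6 := Finset.card_union_le (Finset.univ.biUnion fun i => (cycX G v i).toFinset)
      (Finset.univ.biUnion fun i => (cycY G v i).toFinset)
    omega
  · right
    push Not at hR2
    obtain ⟨a, b, c, ha, hb, hc, ab, ac, bc⟩ := Finset.two_lt_card_iff.1 hR2
    rw [Set.mem_toFinset] at ha hb hc
    refine ⟨⋃ i, cycX G v i, ?_, ?_⟩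
    · intro x hx y hy hxy
      rw [Set.mem_iUnion] at hx hy
      obtain ⟨i, hx⟩ := hx
      obtain ⟨j, hy⟩ := hy
      by_contra h
      exact aux_K5e hK5e hxy h (RX a ha i x hx).symm (RX b hb i x hx).symm (RX c hc i x hx).symm
        (RX a ha j y hy).symm (RX b hb j y hy).symm (RX c hc j y hy).symm
        (Rcl a ha b hb ab) (Rcl a ha c hc ac) (Rcl b hb c hc bc)
    · intro hcon
      have hrS : r ∈ (⋃ i, cycX G v i)ᶜ := by
        simp only [Set.mem_compl_iff, Set.mem_iUnion, not_exists]
        intro i hi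
        exact hr.2 i ((hi.2 i).2 (Or.inl rfl))
      have hvS : v 0 ∈ (⋃ i, cycX G v i)ᶜ := by
        simp only [Set.mem_compl_iff, Set.mem_iUnion, not_exists]
        intro i hi
        exact hi.1 ⟨0, rfl⟩
      obtain ⟨p⟩ := hcon.preconnected ⟨r, hrS⟩ ⟨v 0, hvS⟩
      obtain ⟨d, -, h1, h2⟩ := p.exists_boundary_dart {w | w.1 ∈ cycR G v} hr
        (fun h => h.1 ⟨0, rfl⟩)
      have hadj : G.Adj d.fst.1 d.snd.1 := d.adj
      rcases cls d.snd.1 with ⟨i, h⟩ | h | ⟨i, h⟩ | ⟨i, h⟩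
      · exact h1.2 i (h ▸ hadj)
      · exact h2 h
      · exact d.snd.2 (Set.mem_iUnion.2 ⟨i, h⟩)
      · exact RY _ h1 i _ h hadj
end
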